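/- arXiv:2012.15273 — 2 statements merged into one kernel-verified Lean document; each statement's English description precedes it below -/
import Mathlib

section
/- Let v1 = 1 − ε1 and v2 = 1 − ε2 with ε1, ε2 ∈ (0, 1) be two ultra-relativistic speeds. Then the squared Lorentz factor of the relativistic sum satisfies the two-sided bound 4·Γ(v1)²·Γ(v2)²·(1 − ε1 − ε2) ≤ Γ(v2 ⊕ v1)² ≤ 4·Γ(v1)²·Γ(v2)²; in particular Γ(v2 ⊕ v1)² is approximated by 4Γ(v1)²Γ(v2)² with relative error at most ε1 + ε2. -/
/-- Lorentz factor of a speed `v` (in units of the speed of light): `Γ(v) = 1/√(1 - v²)`. -/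
noncomputable def lorentz (v : ℝ) : ℝ := 1 / Real.sqrt (1 - v ^ 2)

/-- Relativistic addition of velocities. -/
noncomputable def radd (v2 v1 : ℝ) : ℝ := (v2 + v1) / (1 + v2 * v1)

/-!
Lorentz factors compose as `Γ(v2 ⊕ v1) = Γ(v1) Γ(v2) (1 + v2 v1)`, so everything reduces to
bounding `(1 + v2 v1)²`. It is at most `4` since `|v2 v1| < 1`, and it exceeds
`4 (v1 + v2 - 1) = 4 (1 - ε1 - ε2)` by `(1 - v2 v1)² + 4 (1 - v2) (1 - v1) ≥ 0`.
-/

theorem one_sub_radd_sq {v2 v1 : ℝ} (h : 1 + v2 * v1 ≠ 0) :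
    1 - radd v2 v1 ^ 2 = (1 - v1 ^ 2) * (1 - v2 ^ 2) / (1 + v2 * v1) ^ 2 := by
  unfold radd
  field_simp
  ring

theorem abs_mul_lt_one {R : Type*} [Ring R] [LinearOrder R] [IsOrderedRing R] {a b : R}
    (ha : |a| < 1) (hb : |b| < 1) : |a * b| < 1 := by
  rw [abs_mul]
  exact mul_lt_one_of_nonneg_of_lt_one_left (abs_nonneg a) ha hb.le

theorem lorentz_radd {v2 v1 : ℝ} (hv2 : |v2| < 1) (hv1 : |v1| < 1) :
    lorentz (radd v2 v1) = lorentz v1 * lorentz v2 * (1 + v2 * v1) := by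
  have h_pos : 0 < 1 + v2 * v1 := by
    linarith [neg_lt_of_abs_lt (abs_mul_lt_one hv2 hv1)]
  have h_nonneg1 : 0 ≤ 1 - v1 ^ 2 := sub_nonneg.2 ((sq_le_one_iff_abs_le_one v1).2 hv1.le)
  have h_nonneg2 : 0 ≤ 1 - v2 ^ 2 := sub_nonneg.2 ((sq_le_one_iff_abs_le_one v2).2 hv2.le)
  unfold lorentz
  rw [one_sub_radd_sq h_pos.ne', Real.sqrt_div (mul_nonneg h_nonneg1 h_nonneg2),
    Real.sqrt_mul h_nonneg1, Real.sqrt_sq h_pos.le, one_div_div, div_mul_div_comm, one_mul,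
    one_div_mul_eq_div]

theorem lorentz_sq_radd {v2 v1 : ℝ} (hv2 : |v2| < 1) (hv1 : |v1| < 1) :
    lorentz (radd v2 v1) ^ 2 = lorentz v1 ^ 2 * lorentz v2 ^ 2 * (1 + v2 * v1) ^ 2 := by
  rw [lorentz_radd hv2 hv1, mul_pow, mul_pow]

theorem four_mul_add_sub_one_le_one_add_mul_sq {R : Type*} [CommRing R] [LinearOrder R]
    [IsOrderedRing R] {a b : R} (ha : a ≤ 1) (hb : b ≤ 1) :
    4 * (a + b - 1) ≤ (1 + b * a) ^ 2 := by
  have h_mul : 0 ≤ (1 - b) * (1 - a) := mul_nonneg (sub_nonneg.2 hb) (sub_nonneg.2 ha)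
  calc 4 * (a + b - 1) ≤ 4 * (a + b - 1) + ((1 - b * a) ^ 2 + 4 * ((1 - b) * (1 - a))) :=
        le_add_of_nonneg_right (add_nonneg (sq_nonneg _) (mul_nonneg zero_le_four h_mul))
    _ = (1 + b * a) ^ 2 := by ring

theorem le_lorentz_sq_radd {v2 v1 : ℝ} (hv2 : |v2| < 1) (hv1 : |v1| < 1) :
    4 * lorentz v1 ^ 2 * lorentz v2 ^ 2 * (v1 + v2 - 1) ≤ lorentz (radd v2 v1) ^ 2 :=
  calc 4 * lorentz v1 ^ 2 * lorentz v2 ^ 2 * (v1 + v2 - 1)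
      = lorentz v1 ^ 2 * lorentz v2 ^ 2 * (4 * (v1 + v2 - 1)) := by ring
    _ ≤ lorentz v1 ^ 2 * lorentz v2 ^ 2 * (1 + v2 * v1) ^ 2 := by
        gcongr
        exact four_mul_add_sub_one_le_one_add_mul_sq (le_of_abs_le hv1.le) (le_of_abs_le hv2.le)
    _ = lorentz (radd v2 v1) ^ 2 := (lorentz_sq_radd hv2 hv1).symm

theorem lorentz_sq_radd_le {v2 v1 : ℝ} (hv2 : |v2| < 1) (hv1 : |v1| < 1) :
    lorentz (radd v2 v1) ^ 2 ≤ 4 * lorentz v1 ^ 2 * lorentz v2 ^ 2 := by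
  have h_mul := abs_lt.1 (abs_mul_lt_one hv2 hv1)
  calc lorentz (radd v2 v1) ^ 2
      = lorentz v1 ^ 2 * lorentz v2 ^ 2 * (1 + v2 * v1) ^ 2 := lorentz_sq_radd hv2 hv1
    _ ≤ lorentz v1 ^ 2 * lorentz v2 ^ 2 * 2 ^ 2 := by
        gcongr <;> linarith
    _ = 4 * lorentz v1 ^ 2 * lorentz v2 ^ 2 := by ring

theorem lorentz_sq_radd_ultrarelativistic_general (ε1 ε2 : ℝ)
    (h1 : ε1 ∈ Set.Ioo (0 : ℝ) 2) (h2 : ε2 ∈ Set.Ioo (0 : ℝ) 2) :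
    4 * (lorentz (1 - ε1)) ^ 2 * (lorentz (1 - ε2)) ^ 2 * (1 - ε1 - ε2)
      ≤ (lorentz (radd (1 - ε2) (1 - ε1))) ^ 2 ∧
    (lorentz (radd (1 - ε2) (1 - ε1))) ^ 2
      ≤ 4 * (lorentz (1 - ε1)) ^ 2 * (lorentz (1 - ε2)) ^ 2 := by
  have hv1 : |1 - ε1| < 1 := abs_lt.2 ⟨by linarith [h1.2], by linarith [h1.1]⟩
  have hv2 : |1 - ε2| < 1 := abs_lt.2 ⟨by linarith [h2.2], by linarith [h2.1]⟩
  have h_sum : 1 - ε1 - ε2 = (1 - ε1) + (1 - ε2) - 1 := by ring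
  rw [h_sum]
  exact ⟨le_lorentz_sq_radd hv2 hv1, lorentz_sq_radd_le hv2 hv1⟩

/-- For ultra-relativistic speeds `v1 = 1 − ε1` and `v2 = 1 − ε2` with `ε1, ε2 ∈ (0,1)`,
the squared Lorentz factor of the relativistic sum satisfies
`4·Γ(v1)²·Γ(v2)²·(1 − ε1 − ε2) ≤ Γ(v2 ⊕ v1)² ≤ 4·Γ(v1)²·Γ(v2)²`;
in particular `Γ(v2 ⊕ v1)²` is approximated by `4Γ(v1)²Γ(v2)²` with relative error
at most `ε1 + ε2`. -/
theorem lorentz_sq_radd_ultrarelativistic (ε1 ε2 : ℝ)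
    (h1 : ε1 ∈ Set.Ioo (0 : ℝ) 1) (h2 : ε2 ∈ Set.Ioo (0 : ℝ) 1) :
    4 * (lorentz (1 - ε1)) ^ 2 * (lorentz (1 - ε2)) ^ 2 * (1 - ε1 - ε2)
      ≤ (lorentz (radd (1 - ε2) (1 - ε1))) ^ 2 ∧
    (lorentz (radd (1 - ε2) (1 - ε1))) ^ 2
      ≤ 4 * (lorentz (1 - ε1)) ^ 2 * (lorentz (1 - ε2)) ^ 2 :=
  lorentz_sq_radd_ultrarelativistic_general ε1 ε2
    (Set.Ioo_subset_Ioo_right one_le_two h1) (Set.Ioo_subset_Ioo_right one_le_two h2)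
end

section
/- Let v1, v2 ∈ (-1, 1). Then the squared Lorentz factor of the relativistic difference satisfies Γ(v2 ⊖ v1)² ≥ 1/2 + (1/4)·(Γ(v2)²/Γ(v1)² + Γ(v1)²/Γ(v2)²), with equality if and only if v1 = v2. -/
/-- Relativistic subtraction of velocities. -/
noncomputable def rsub (v2 v1 : ℝ) : ℝ := (v2 - v1) / (1 - v2 * v1)

/-!
Since `Γ(v2 ⊖ v1) = Γ(v2) Γ(v1) (1 - v2 v1)`, writing
`1 - v2 v1 = (1/Γ(v2)² + 1/Γ(v1)²)/2 + (v2 - v1)²/2` shows that `Γ(v2 ⊖ v1)` exceeds the mean of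
`Γ(v2)/Γ(v1)` and its inverse by `Γ(v2) Γ(v1) (v2 - v1)²/2`. The bound is the square of this
comparison of positive numbers.
-/

open Set

section

variable {v w : ℝ}

lemma one_sub_sq_pos (hv : v ∈ Ioo (-1 : ℝ) 1) : 0 < 1 - v ^ 2 :=
  sub_pos.2 ((sq_lt_one_iff_abs_lt_one v).2 (abs_lt.2 hv))

lemma one_sub_mul_pos (hv : v ∈ Ioo (-1 : ℝ) 1) (hw : w ∈ Ioo (-1 : ℝ) 1) :
    0 < 1 - w * v := by
  linarith [one_sub_sq_pos hv, one_sub_sq_pos hw, sq_nonneg (w - v)]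

lemma lorentz_pos (hv : v ∈ Ioo (-1 : ℝ) 1) : 0 < lorentz v :=
  one_div_pos.2 (Real.sqrt_pos.2 (one_sub_sq_pos hv))

lemma one_div_lorentz_sq (hv : v ∈ Icc (-1 : ℝ) 1) : 1 / lorentz v ^ 2 = 1 - v ^ 2 := by
  have hnonneg : 0 ≤ 1 - v ^ 2 := sub_nonneg.2 ((sq_le_one_iff_abs_le_one v).2 (abs_le.2 hv))
  rw [lorentz, div_pow, one_pow, one_div_one_div, Real.sq_sqrt hnonneg]

lemma one_sub_rsub_sq (h : 1 - w * v ≠ 0) :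
    1 - rsub w v ^ 2 = (1 - w ^ 2) * (1 - v ^ 2) / (1 - w * v) ^ 2 := by
  rw [rsub]
  field_simp
  ring

lemma lorentz_rsub (hv : v ∈ Ioo (-1 : ℝ) 1) (hw : w ∈ Ioo (-1 : ℝ) 1) :
    lorentz (rsub w v) = lorentz w * lorentz v * (1 - w * v) := by
  have hmul := one_sub_mul_pos hv hw
  have hsq_w := (one_sub_sq_pos hw).le
  have hsq_v := (one_sub_sq_pos hv).le
  rw [lorentz, one_sub_rsub_sq hmul.ne', Real.sqrt_div (mul_nonneg hsq_w hsq_v),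
    Real.sqrt_mul hsq_w, Real.sqrt_sq hmul.le, lorentz, lorentz, one_div_div,
    one_div_mul_one_div, one_div_mul_eq_div]

lemma lorentz_rsub_sub_mean (hv : v ∈ Ioo (-1 : ℝ) 1) (hw : w ∈ Ioo (-1 : ℝ) 1) :
    lorentz (rsub w v) - (lorentz w / lorentz v + lorentz v / lorentz w) / 2 =
      lorentz w * lorentz v * (w - v) ^ 2 / 2 := by
  have hΓv := (lorentz_pos hv).ne'
  have hΓw := (lorentz_pos hw).ne'
  have hmean : (lorentz w / lorentz v + lorentz v / lorentz w) / 2 =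
      lorentz w * lorentz v * ((1 / lorentz v ^ 2 + 1 / lorentz w ^ 2) / 2) := by
    field_simp
  rw [lorentz_rsub hv hw, hmean, one_div_lorentz_sq (Ioo_subset_Icc_self hv),
    one_div_lorentz_sq (Ioo_subset_Icc_self hw)]
  ring

lemma mean_lorentz_ratio_le_lorentz_rsub (hv : v ∈ Ioo (-1 : ℝ) 1)
    (hw : w ∈ Ioo (-1 : ℝ) 1) :
    (lorentz w / lorentz v + lorentz v / lorentz w) / 2 ≤ lorentz (rsub w v) := by
  have hΓv := lorentz_pos hv
  have hΓw := lorentz_pos hw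
  rw [← sub_nonneg, lorentz_rsub_sub_mean hv hw]
  positivity

lemma lorentz_rsub_eq_mean_lorentz_ratio_iff (hv : v ∈ Ioo (-1 : ℝ) 1)
    (hw : w ∈ Ioo (-1 : ℝ) 1) :
    lorentz (rsub w v) = (lorentz w / lorentz v + lorentz v / lorentz w) / 2 ↔ v = w := by
  rw [← sub_eq_zero, lorentz_rsub_sub_mean hv hw]
  simp [(lorentz_pos hv).ne', (lorentz_pos hw).ne', sub_eq_zero, eq_comm (a := w)]

end

/-- For `v1, v2 ∈ (-1,1)`, the squared Lorentz factor of the relativistic difference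
satisfies `Γ(v2 ⊖ v1)² ≥ 1/2 + (1/4)·(Γ(v2)²/Γ(v1)² + Γ(v1)²/Γ(v2)²)`,
with equality if and only if `v1 = v2`. -/
theorem lorentz_sq_rsub_bound (v1 v2 : ℝ)
    (h1 : v1 ∈ Set.Ioo (-1 : ℝ) 1) (h2 : v2 ∈ Set.Ioo (-1 : ℝ) 1) :
    (lorentz (rsub v2 v1)) ^ 2
      ≥ 1 / 2 + (1 / 4) * ((lorentz v2) ^ 2 / (lorentz v1) ^ 2
        + (lorentz v1) ^ 2 / (lorentz v2) ^ 2) ∧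
    ((lorentz (rsub v2 v1)) ^ 2
      = 1 / 2 + (1 / 4) * ((lorentz v2) ^ 2 / (lorentz v1) ^ 2
        + (lorentz v1) ^ 2 / (lorentz v2) ^ 2) ↔ v1 = v2) := by
  have hΓ1 := lorentz_pos h1
  have hΓ2 := lorentz_pos h2
  have hbound := mean_lorentz_ratio_le_lorentz_rsub h1 h2
  have hmean_nonneg : 0 ≤ (lorentz v2 / lorentz v1 + lorentz v1 / lorentz v2) / 2 := by positivity
  have hmean_sq : 1 / 2 + (1 / 4) * (lorentz v2 ^ 2 / lorentz v1 ^ 2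
      + lorentz v1 ^ 2 / lorentz v2 ^ 2) =
      ((lorentz v2 / lorentz v1 + lorentz v1 / lorentz v2) / 2) ^ 2 := by
    field_simp
    ring
  rw [hmean_sq]
  exact ⟨pow_le_pow_left₀ hmean_nonneg hbound 2,
    (pow_left_inj₀ (hmean_nonneg.trans hbound) hmean_nonneg two_ne_zero).trans
      (lorentz_rsub_eq_mean_lorentz_ratio_iff h1 h2)⟩
end
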